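/- Let P be the R-measure and c = (1/2, √3/6). The set { S₁(c), S₂(c), S₃(S₃(c)), (S₃(S₁(c)) + S₃(S₂(c)))/2 } = { (1/6, √3/18), (5/6, √3/18), (1/2, 25√3/54), (1/2, 19√3/54) } is an optimal set of four-means for P, with quantization error V₄(P) = (1/27)·(2·V₁(P) + V₂(P)) = 23/1458. -/

import Mathlib

open MeasureTheory ENNReal

noncomputable section

abbrev E2 : Type := EuclideanSpace ℝ (Fin 2)

/-- The point (a, b) of the Euclidean plane. -/
def pt (a b : ℝ) : E2 := (WithLp.equiv 2 (Fin 2 → ℝ)).symm ![a, b]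

/-- S₁(x) = x/3. -/
def S1 : E2 → E2 := fun x => (3 : ℝ)⁻¹ • x

/-- S₂(x) = x/3 + (2/3, 0). -/
def S2 : E2 → E2 := fun x => (3 : ℝ)⁻¹ • x + pt (2/3) 0

/-- S₃(x) = x/3 + (1/3, √3/3). -/
def S3 : E2 → E2 := fun x => (3 : ℝ)⁻¹ • x + pt (1/3) (Real.sqrt 3 / 3)

def Smap : Fin 3 → E2 → E2 := ![S1, S2, S3]

/-- For a word ω = ω₁⋯ω_k ∈ {1,2,3}^k, the composition S_ω = S_{ω₁} ∘ ⋯ ∘ S_{ω_k}. -/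
def Sword {k : ℕ} (ω : Fin k → Fin 3) : E2 → E2 :=
  fun x => (List.ofFn fun i => Smap (ω i)).foldr (fun g y => g y) x

/-- The closed triangle with vertices (0,0), (1,0), (1/2, √3/2). -/
def Tri : Set E2 := convexHull ℝ {pt 0 0, pt 1 0, pt (1/2) (Real.sqrt 3 / 2)}

/-- The distortion error ∫ min_{a ∈ α} ‖x − a‖² dμ of a set α of points. -/
def err (μ : Measure E2) (α : Set E2) : ℝ≥0∞ :=
  ∫⁻ x, ⨅ a ∈ α, ENNReal.ofReal (‖x - a‖ ^ 2) ∂μ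

/-- The n-th quantization error V_n(μ). -/
def quantErr (μ : Measure E2) (n : ℕ) : ℝ≥0∞ :=
  ⨅ (α : Set E2) (_ : α.Finite ∧ α.ncard ≤ n), err μ α

/-- α is an optimal set of n-means for μ. -/
def IsOptimal (μ : Measure E2) (n : ℕ) (α : Set E2) : Prop :=
  α.Finite ∧ α.ncard ≤ n ∧ err μ α = quantErr μ n

/-!
On a cell `x ↦ r • x + u` of the triangle, `‖· - a‖ ^ 2` is the affine interpolation of its values
at the three vertices minus a spread that does not depend on `a`. Hence the distortion of a finite
set `α` is at least the mean over all cell vertices of the squared distance to `α`, minus a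
constant, with equality when each cell is served by a single centre. What remains is a finite
clustering problem, which is bounded below by linear programming duality: in units of `1 / 36`, a
centre can never save more than `24` on the prices `14` of the corners of the triangle and `7` of
the other cell vertices.

With the nine vertices of the first level cells this is sharp for one and two centres. With the
second level cells, the same prices in each of the three triangles of the first level remain
feasible, because a cluster meeting two of these triangles is a pair of corners facing each other;
the resulting bound is sharp for four centres.
-/

section Leibniz

variable {ι F : Type*} [NormedAddCommGroup F] [InnerProductSpace ℝ F]

theorem norm_sum_smul_sq (s : Finset ι) (w : ι → ℝ) (x : ι → F) :
    ‖∑ i ∈ s, w i • x i‖ ^ 2 = (∑ i ∈ s, w i) * ∑ i ∈ s, w i * ‖x i‖ ^ 2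
      - (∑ i ∈ s, ∑ j ∈ s, w i * w j * ‖x i - x j‖ ^ 2) / 2 := by
  have inner_expand : ‖∑ i ∈ s, w i • x i‖ ^ 2 = ∑ i ∈ s, ∑ j ∈ s,
      (w j * (w i * ‖x i‖ ^ 2) + w i * (w j * ‖x j‖ ^ 2) - w i * w j * ‖x i - x j‖ ^ 2) / 2 := by
    rw [← real_inner_self_eq_norm_sq, sum_inner]
    simp_rw [inner_sum, real_inner_smul_left, real_inner_smul_right, norm_sub_sq_real]
    exact Finset.sum_congr rfl fun i _ ↦ Finset.sum_congr rfl fun j _ ↦ by ring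
  rw [inner_expand]
  simp_rw [← Finset.sum_div, Finset.sum_sub_distrib, Finset.sum_add_distrib, ← Finset.mul_sum,
    ← Finset.sum_mul]
  simp_rw [← Finset.mul_sum]
  ring

theorem half_sum_sum_norm_sub_sq_le (s : Finset ι) (x : ι → F) (a : F) :
    (∑ i ∈ s, ∑ j ∈ s, ‖x i - x j‖ ^ 2) / 2 ≤ s.card * ∑ i ∈ s, ‖x i - a‖ ^ 2 := by
  have leibniz := norm_sum_smul_sq s (fun _ ↦ 1) fun i ↦ x i - a
  simp only [one_smul, one_mul, mul_one, sub_sub_sub_cancel_right, Finset.sum_const,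
    nsmul_eq_mul] at leibniz
  linarith [sq_nonneg ‖∑ i ∈ s, (x i - a)‖]

theorem norm_sum_smul_sq_of_pairwise_norm_sub_eq_one {s : Finset ι} {v : ι → F}
    (hv : Pairwise fun i j ↦ ‖v i - v j‖ = 1) {w : ι → ℝ} (hw : ∑ i ∈ s, w i = 0) :
    ‖∑ i ∈ s, w i • v i‖ ^ 2 = (∑ i ∈ s, w i ^ 2) / 2 := by
  classical
  have term : ∀ i j, w i * w j * ‖v i - v j‖ ^ 2 = w i * w j - if i = j then w i ^ 2 else 0 := by
    intro i j
    rcases eq_or_ne i j with rfl | hij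
    · simp [sq]
    · simp [hv hij, hij]
  simp_rw [norm_sum_smul_sq, hw, term, Finset.sum_sub_distrib, ← Finset.mul_sum, hw]
  simp [neg_div]

theorem affineIndependent_of_pairwise_norm_sub_eq_one {v : ι → F}
    (hv : Pairwise fun i j ↦ ‖v i - v j‖ = 1) : AffineIndependent ℝ v := by
  refine affineIndependent_iff.2 fun s w hw hwv i hi ↦ ?_
  have h := norm_sum_smul_sq_of_pairwise_norm_sub_eq_one hv hw
  have sum_sq_eq_zero : ∑ i ∈ s, w i ^ 2 = 0 := by
    simpa [hwv] using h.symm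
  simpa using (Finset.sum_eq_zero_iff_of_nonneg fun i _ ↦ sq_nonneg (w i)).1 sum_sq_eq_zero i hi

end Leibniz

section Duality

variable {ι F : Type*} [Fintype ι] [NormedAddCommGroup F]

/-- A feasible solution `y` of the linear program dual to placing centres at price `Λ` each, the
demand point `x p` being served by a centre `a` at cost `‖x p - a‖ ^ 2`: no single centre can save
more than its price on the amounts `y p` that the demand points are ready to pay. -/
def IsDualCertificate (x : ι → F) (y : ι → ℝ) (Λ : ℝ) : Prop :=
  ∀ a, ∑ p, max 0 (y p - ‖x p - a‖ ^ 2) ≤ Λ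

namespace IsDualCertificate

variable {x : ι → F} {y : ι → ℝ} {Λ : ℝ}

theorem nonneg (h : IsDualCertificate x y Λ) : 0 ≤ Λ :=
  (Finset.sum_nonneg fun _ _ ↦ le_max_left _ _).trans (h 0)

theorem sum_sub_mul_le_sum (h : IsDualCertificate x y Λ) {α : Set F} (hα : α.Finite) {n : ℕ}
    (hn : α.ncard ≤ n) {m : ι → ℝ} (hm : ∀ p, ∃ a ∈ α, ‖x p - a‖ ^ 2 ≤ m p) :
    ∑ p, y p - n * Λ ≤ ∑ p, m p := by
  have saving_le : ∀ p, y p - m p ≤ ∑ a ∈ hα.toFinset, max 0 (y p - ‖x p - a‖ ^ 2) := by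
    intro p
    obtain ⟨a, ha, hle⟩ := hm p
    calc y p - m p ≤ max 0 (y p - ‖x p - a‖ ^ 2) := le_max_of_le_right (by linarith)
      _ ≤ _ := Finset.single_le_sum (f := fun a ↦ max 0 (y p - ‖x p - a‖ ^ 2))
        (fun _ _ ↦ le_max_left _ _) (hα.mem_toFinset.2 ha)
  have total_saving_le : ∑ p, (y p - m p) ≤ n * Λ :=
    calc ∑ p, (y p - m p)
        ≤ ∑ p, ∑ a ∈ hα.toFinset, max 0 (y p - ‖x p - a‖ ^ 2) :=
          Finset.sum_le_sum fun p _ ↦ saving_le p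
      _ = ∑ a ∈ hα.toFinset, ∑ p, max 0 (y p - ‖x p - a‖ ^ 2) := Finset.sum_comm
      _ ≤ hα.toFinset.card • Λ := Finset.sum_le_card_nsmul _ _ _ fun a _ ↦ h a
      _ ≤ n * Λ := by
          rw [nsmul_eq_mul, ← Set.ncard_eq_toFinset_card α hα]
          have := h.nonneg
          gcongr
  rw [Finset.sum_sub_distrib] at total_saving_le
  linarith

-- Points served by a common centre `a` satisfy `‖x p - x q‖² ≤ 2 (‖x p - a‖² + ‖x q - a‖²)`, so
-- only clusters of pairwise close points have to be examined.
theorem of_forall_cluster [InnerProductSpace ℝ F] (hΛ : 0 ≤ Λ)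
    (h : ∀ s : Finset ι, (s : Set ι).Pairwise (fun p q ↦ ‖x p - x q‖ ^ 2 < 2 * (y p + y q)) →
      s.card * (∑ p ∈ s, y p - Λ) ≤ (∑ p ∈ s, ∑ q ∈ s, ‖x p - x q‖ ^ 2) / 2) :
    IsDualCertificate x y Λ := by
  intro a
  set s := Finset.univ.filter fun p ↦ 0 < y p - ‖x p - a‖ ^ 2 with hs
  have close : (s : Set ι).Pairwise fun p q ↦ ‖x p - x q‖ ^ 2 < 2 * (y p + y q) := by
    intro p hp q hq _
    simp only [hs, Finset.coe_filter_univ, Set.mem_ofPred_eq] at hp hq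
    have parallelogram := parallelogram_law_with_norm ℝ (x p - a) (x q - a)
    rw [sub_sub_sub_cancel_right] at parallelogram
    nlinarith [sq_nonneg ‖x p - a + (x q - a)‖]
  have sum_eq : ∑ p, max 0 (y p - ‖x p - a‖ ^ 2) = ∑ p ∈ s, y p - ∑ p ∈ s, ‖x p - a‖ ^ 2 := by
    rw [← Finset.sum_sub_distrib, hs, Finset.sum_filter]
    refine Finset.sum_congr rfl fun p _ ↦ ?_
    split_ifs with hp
    · exact max_eq_right hp.le
    · exact max_eq_left (not_lt.1 hp)
  rw [sum_eq]
  rcases s.eq_empty_or_nonempty with hempty | hne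
  · simpa [hempty] using hΛ
  · have card_pos : (0 : ℝ) < s.card := by exact_mod_cast hne.card_pos
    refine le_of_mul_le_mul_left ?_ card_pos
    linarith [h s close, half_sum_sum_norm_sub_sq_le s x a]

end IsDualCertificate

end Duality

section SelfSimilar

variable {ι ι' X : Type*} [Fintype ι] [Fintype ι'] [MeasurableSpace X]

/-- `μ` is a self-similar (Hutchinson) measure of the iterated function system `T` with
weights `w`. -/
structure IsSelfSimilar (T : ι → X → X) (w : ι → NNReal) (μ : Measure X) : Prop where
  measurable : ∀ i, Measurable (T i)
  eq_sum : μ = ∑ i, w i • μ.map (T i)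

namespace IsSelfSimilar

variable {T : ι → X → X} {w : ι → NNReal} {T' : ι' → X → X} {w' : ι' → NNReal} {μ : Measure X}

theorem lintegral_eq (h : IsSelfSimilar T w μ) {f : X → ℝ≥0∞} (hf : Measurable f) :
    ∫⁻ x, f x ∂μ = ∑ i, w i * ∫⁻ x, f (T i x) ∂μ := by
  conv_lhs => rw [h.eq_sum]
  simp only [lintegral_finsetSum_measure, lintegral_smul_measure, lintegral_map hf (h.measurable _),
    ENNReal.smul_def, smul_eq_mul]

theorem integral_eq [IsFiniteMeasure μ] (h : IsSelfSimilar T w μ) {f : X → ℝ} (hf : Measurable f)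
    (hfT : ∀ i, Integrable (fun x ↦ f (T i x)) μ) :
    ∫ x, f x ∂μ = ∑ i, w i * ∫ x, f (T i x) ∂μ := by
  have integrable_map : ∀ i, Integrable f (w i • μ.map (T i)) := fun i ↦
    ((integrable_map_measure hf.aestronglyMeasurable (h.measurable i).aemeasurable).2
      (hfT i)).smul_measure_nnreal
  conv_lhs => rw [h.eq_sum]
  rw [integral_finsetSum_measure fun i _ ↦ integrable_map i]
  refine Finset.sum_congr rfl fun i _ ↦ ?_
  rw [integral_smul_nnreal_measure,
    integral_map (h.measurable i).aemeasurable hf.aestronglyMeasurable, NNReal.smul_def,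
    smul_eq_mul]

theorem sum_weights [IsProbabilityMeasure μ] (h : IsSelfSimilar T w μ) : ∑ i, w i = 1 := by
  have total := h.lintegral_eq (f := fun _ ↦ 1) measurable_const
  simp only [lintegral_const, measure_univ, mul_one] at total
  exact_mod_cast total.symm

theorem comp (h : IsSelfSimilar T w μ) (h' : IsSelfSimilar T' w' μ) :
    IsSelfSimilar (fun p : ι × ι' ↦ T p.1 ∘ T' p.2) (fun p ↦ w p.1 * w' p.2) μ where
  measurable p := (h.measurable p.1).comp (h'.measurable p.2)
  eq_sum := by
    have map_eq : ∀ i, μ.map (T i) = ∑ j, w' j • μ.map (T i ∘ T' j) := by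
      intro i
      conv_lhs => rw [h'.eq_sum]
      rw [Measure.map_finset_sum (h.measurable i).aemeasurable]
      simp only [Measure.map_smul, Measure.map_map (h.measurable i) (h'.measurable _)]
    conv_lhs => rw [h.eq_sum]
    simp only [map_eq, Finset.smul_sum, smul_smul, Fintype.sum_prod_type]

-- A bounded increasing function of `min f 0`, such as its arctangent, has an integral that the
-- self-similarity relation can only increase.
theorem ae_nonneg [IsProbabilityMeasure μ] (h : IsSelfSimilar T w μ) {ρ : ℝ} (hρ0 : 0 ≤ ρ)
    (hρ1 : ρ < 1) {f : X → ℝ} (hf : Measurable f) (hfT : ∀ i x, ρ * f x ≤ f (T i x)) :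
    ∀ᵐ x ∂μ, 0 ≤ f x := by
  set g : X → ℝ := fun x ↦ min (f x) 0
  have g_measurable : Measurable g := hf.min measurable_const
  have arctan_integrable : ∀ {k : X → ℝ}, Measurable k →
      Integrable (fun x ↦ Real.arctan (k x)) μ := fun hk ↦
    Integrable.of_bound (Real.measurable_arctan.comp hk).aestronglyMeasurable (Real.pi / 2)
      (ae_of_all _ fun _ ↦ abs_le.2 ⟨(Real.neg_pi_div_two_lt_arctan _).le,
        (Real.arctan_lt_pi_div_two _).le⟩)
  have g_le : ∀ x, g x ≤ ρ * g x := fun x ↦ by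
    nlinarith [min_le_right (f x) 0]
  have mul_g_le : ∀ i x, ρ * g x ≤ g (T i x) := fun i x ↦
    le_min ((mul_le_mul_of_nonneg_left (min_le_left _ _) hρ0).trans (hfT i x))
      (mul_nonpos_of_nonneg_of_nonpos hρ0 (min_le_right _ _))
  have integral_le : ∫ x, Real.arctan (ρ * g x) ∂μ ≤ ∫ x, Real.arctan (g x) ∂μ := by
    rw [h.integral_eq (f := fun x ↦ Real.arctan (g x)) (by fun_prop)
      fun i ↦ arctan_integrable (g_measurable.comp (h.measurable i))]
    have sum_weights : ∑ i, (w i : ℝ) = 1 := by exact_mod_cast h.sum_weights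
    rw [← one_mul (∫ x, Real.arctan (ρ * g x) ∂μ), ← sum_weights, Finset.sum_mul]
    gcongr with i
    · exact arctan_integrable (g_measurable.const_mul ρ)
    · exact arctan_integrable (g_measurable.comp (h.measurable i))
    · exact fun x ↦ Real.arctan_mono (mul_g_le i x)
  have arctan_le : ∀ x, Real.arctan (g x) ≤ Real.arctan (ρ * g x) := fun x ↦
    Real.arctan_mono (g_le x)
  have arctan_ae_eq := (integral_eq_iff_of_ae_le (arctan_integrable g_measurable)
    (arctan_integrable (g_measurable.const_mul ρ)) (ae_of_all _ arctan_le)).1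
    ((integral_mono (arctan_integrable g_measurable)
      (arctan_integrable (g_measurable.const_mul ρ)) arctan_le).antisymm integral_le)
  filter_upwards [arctan_ae_eq] with x hx
  have g_eq : g x = ρ * g x := Real.arctan_injective hx
  have g_eq_zero : g x = 0 := by nlinarith
  exact min_eq_right_iff.1 g_eq_zero

end IsSelfSimilar

end SelfSimilar

section Barycentric

theorem coord_homothety {ι 𝕜 V P : Type*} [DecidableEq ι] [CommRing 𝕜] [AddCommGroup V] [Module 𝕜 V]
    [AddTorsor V P] (b : AffineBasis ι 𝕜 P) (ρ : 𝕜) (i k : ι) (x : P) :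
    b.coord k (AffineMap.homothety (b i) ρ x) =
      ρ * b.coord k x + (1 - ρ) * if k = i then 1 else 0 := by
  rw [AffineMap.homothety_eq_lineMap, AffineMap.apply_lineMap, AffineMap.lineMap_apply_ring,
    b.coord_apply]
  ring

theorem measurable_coord {ι E : Type*} [Finite ι] [NormedAddCommGroup E] [NormedSpace ℝ E]
    [MeasurableSpace E] [BorelSpace E] (b : AffineBasis ι ℝ E) (k : ι) : Measurable (b.coord k) :=
  have := b.finiteDimensional
  (b.coord k).continuous_of_finiteDimensional.measurable

variable {ι E : Type*} [Fintype ι] [NormedAddCommGroup E] [InnerProductSpace ℝ E]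
  (b : AffineBasis ι ℝ E)

/-- The variance about `x` of the vertices of the simplex `b`, weighted by the barycentric
coordinates of `x`: the error committed by interpolating `‖· - a‖ ^ 2` affinely at the vertices,
which does not depend on `a`. -/
def barycentricSpread (x : E) : ℝ :=
  ∑ k, b.coord k x * ‖b k - x‖ ^ 2

theorem sum_coord_mul_norm_smul_add_sub_sq (r : ℝ) (u a x : E) :
    ∑ k, b.coord k x * ‖r • b k + u - a‖ ^ 2 =
      r ^ 2 * barycentricSpread b x + ‖r • x + u - a‖ ^ 2 := by
  have expand : ∀ k, ‖r • b k + u - a‖ ^ 2 = r ^ 2 * ‖b k - x‖ ^ 2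
      + 2 * inner ℝ (r • (b k - x)) (r • x + u - a) + ‖r • x + u - a‖ ^ 2 := fun k ↦ by
    have split : r • b k + u - a = r • (b k - x) + (r • x + u - a) := by module
    rw [split, norm_add_sq_real, norm_smul, mul_pow, Real.norm_eq_abs, sq_abs]
  have sum_smul_eq_zero : ∑ k, b.coord k x • r • (b k - x) = 0 := by
    simp only [smul_comm _ r, ← Finset.smul_sum, smul_sub, Finset.sum_sub_distrib,
      b.linear_combination_coord_eq_self, ← Finset.sum_smul, b.sum_coord_apply_eq_one, one_smul,
      sub_self]
  have sum_inner_eq_zero :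
      ∑ k, b.coord k x * inner ℝ (r • (b k - x)) (r • x + u - a) = 0 := by
    simp only [← real_inner_smul_left, ← sum_inner, sum_smul_eq_zero, inner_zero_left]
  simp only [expand, mul_add, mul_left_comm _ (r ^ 2), mul_left_comm _ (2 : ℝ),
    Finset.sum_add_distrib, ← Finset.mul_sum, ← Finset.sum_mul, b.sum_coord_apply_eq_one,
    sum_inner_eq_zero, barycentricSpread]
  ring

theorem sum_coord_mul_norm_sub_sq (a x : E) :
    ∑ k, b.coord k x * ‖b k - a‖ ^ 2 = barycentricSpread b x + ‖x - a‖ ^ 2 := by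
  simpa using sum_coord_mul_norm_smul_add_sub_sq b 1 0 a x

theorem barycentricSpread_homothety (ρ : ℝ) (i : ι) (x : E) :
    barycentricSpread b (AffineMap.homothety (b i) ρ x) =
      ρ ^ 2 * barycentricSpread b x + ρ * (1 - ρ) * ∑ k, b.coord k x * ‖b k - b i‖ ^ 2 := by
  classical
  have at_image := sum_coord_mul_norm_sub_sq b (b i) (AffineMap.homothety (b i) ρ x)
  have norm_homothety_sub : ‖AffineMap.homothety (b i) ρ x - b i‖ ^ 2 = ρ ^ 2 * ‖x - b i‖ ^ 2 := by
    simp [AffineMap.homothety_apply, norm_smul, mul_pow]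
  simp only [coord_homothety, norm_homothety_sub, add_mul, Finset.sum_add_distrib, mul_assoc,
    ← Finset.mul_sum, ite_mul, one_mul, zero_mul, Finset.sum_ite_eq', Finset.mem_univ,
    if_true, sub_self, norm_zero, ne_eq, OfNat.ofNat_ne_zero, not_false_eq_true,
    zero_pow] at at_image
  linear_combination ρ ^ 2 * sum_coord_mul_norm_sub_sq b (b i) x - at_image

theorem measurable_barycentricSpread [MeasurableSpace E] [BorelSpace E] :
    Measurable (barycentricSpread b) := by
  have := b.finiteDimensional
  have coord_measurable := measurable_coord b
  unfold barycentricSpread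
  fun_prop

end Barycentric

namespace IsSelfSimilar

variable {ι E : Type*} [Fintype ι] [NormedAddCommGroup E] [InnerProductSpace ℝ E]
  [MeasurableSpace E] [BorelSpace E] {b : AffineBasis ι ℝ E} {ρ : ℝ} {w : ι → NNReal}
  {μ : Measure E} [IsProbabilityMeasure μ]

theorem ae_coord_nonneg (h : IsSelfSimilar (fun i ↦ AffineMap.homothety (b i) ρ) w μ)
    (hρ0 : 0 ≤ ρ) (hρ1 : ρ < 1) : ∀ᵐ x ∂μ, ∀ k, 0 ≤ b.coord k x := by
  classical
  refine ae_all_iff.2 fun k ↦ h.ae_nonneg hρ0 hρ1 (measurable_coord b k) fun i x ↦ ?_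
  rw [coord_homothety]
  have : 0 ≤ (1 - ρ) * if k = i then 1 else 0 :=
    mul_nonneg (by linarith) (by positivity)
  linarith

theorem integrable_coord (h : IsSelfSimilar (fun i ↦ AffineMap.homothety (b i) ρ) w μ)
    (hρ0 : 0 ≤ ρ) (hρ1 : ρ < 1) (k : ι) : Integrable (b.coord k) μ := by
  refine Integrable.of_bound (measurable_coord b k).aestronglyMeasurable 1 ?_
  filter_upwards [h.ae_coord_nonneg hρ0 hρ1] with x hx
  rw [Real.norm_of_nonneg (hx k), ← b.sum_coord_apply_eq_one x]
  exact Finset.single_le_sum (fun i _ ↦ hx i) (Finset.mem_univ k)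

theorem integrable_barycentricSpread
    (h : IsSelfSimilar (fun i ↦ AffineMap.homothety (b i) ρ) w μ)
    (hρ0 : 0 ≤ ρ) (hρ1 : ρ < 1) : Integrable (barycentricSpread b) μ := by
  refine Integrable.mono' (g := fun x ↦ ∑ k, b.coord k x * ‖b k‖ ^ 2)
    (integrable_finsetSum _ fun k _ ↦ (h.integrable_coord hρ0 hρ1 k).mul_const _)
    (measurable_barycentricSpread b).aestronglyMeasurable ?_
  filter_upwards [h.ae_coord_nonneg hρ0 hρ1] with x hx
  have spread_nonneg : 0 ≤ barycentricSpread b x :=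
    Finset.sum_nonneg fun k _ ↦ mul_nonneg (hx k) (sq_nonneg _)
  have at_zero := sum_coord_mul_norm_sub_sq b 0 x
  simp only [sub_zero] at at_zero
  rw [Real.norm_of_nonneg spread_nonneg, at_zero]
  exact le_add_of_nonneg_right (sq_nonneg _)

theorem integral_coord (h : IsSelfSimilar (fun i ↦ AffineMap.homothety (b i) ρ) w μ)
    (hρ0 : 0 ≤ ρ) (hρ1 : ρ < 1) (k : ι) : ∫ x, b.coord k x ∂μ = w k := by
  classical
  have integrable := h.integrable_coord hρ0 hρ1 k
  have sum_weights : ∑ i, (w i : ℝ) = 1 := by exact_mod_cast h.sum_weights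
  have fixed : ∫ x, b.coord k x ∂μ = ρ * ∫ x, b.coord k x ∂μ + (1 - ρ) * w k := by
    conv_lhs => rw [h.integral_eq (measurable_coord b k) fun i ↦ by
      simp only [coord_homothety]; fun_prop]
    simp only [coord_homothety, integral_add (integrable.const_mul ρ) (integrable_const _),
      integral_const_mul, integral_const, probReal_univ, one_smul, mul_add,
      Finset.sum_add_distrib, ← Finset.sum_mul, sum_weights, one_mul]
    simp [mul_comm]
  have : 0 < 1 - ρ := by linarith
  nlinarith

theorem integral_barycentricSpread
    (h : IsSelfSimilar (fun i ↦ AffineMap.homothety (b i) ρ) w μ)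
    (hρ0 : 0 ≤ ρ) (hρ1 : ρ < 1) : ∫ x, barycentricSpread b x ∂μ =
      ρ / (1 + ρ) * ∑ i, ∑ k, w i * w k * ‖b k - b i‖ ^ 2 := by
  have integrable_spread := h.integrable_barycentricSpread hρ0 hρ1
  have integrable_coord := h.integrable_coord hρ0 hρ1
  have sum_weights : ∑ i, (w i : ℝ) = 1 := by exact_mod_cast h.sum_weights
  have integrable_sum : ∀ i, Integrable (fun x ↦ ∑ k, b.coord k x * ‖b k - b i‖ ^ 2) μ := fun i ↦
    integrable_finsetSum _ fun k _ ↦ (integrable_coord k).mul_const _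
  have integral_image : ∀ i, ∫ x, barycentricSpread b (AffineMap.homothety (b i) ρ x) ∂μ =
      ρ ^ 2 * ∫ x, barycentricSpread b x ∂μ + ρ * (1 - ρ) * ∑ k, w k * ‖b k - b i‖ ^ 2 := by
    intro i
    simp only [barycentricSpread_homothety]
    rw [integral_add (integrable_spread.const_mul _) ((integrable_sum i).const_mul _),
      integral_const_mul, integral_const_mul,
      integral_finsetSum _ fun k _ ↦ (integrable_coord k).mul_const _]
    simp only [integral_mul_const, h.integral_coord hρ0 hρ1]
  have fixed := h.integral_eq (measurable_barycentricSpread b) fun i ↦ by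
    simp only [barycentricSpread_homothety]
    exact (integrable_spread.const_mul _).add ((integrable_sum i).const_mul _)
  simp only [integral_image, mul_add, Finset.sum_add_distrib, ← Finset.sum_mul, sum_weights,
    one_mul, mul_left_comm _ (ρ * (1 - ρ)), ← Finset.mul_sum] at fixed
  simp only [mul_assoc, ← Finset.mul_sum] at fixed ⊢
  have one_sub_ne_zero : 1 - ρ ≠ 0 := by linarith
  have one_add_ne_zero : 1 + ρ ≠ 0 := by linarith
  rw [div_mul_eq_mul_div, eq_div_iff one_add_ne_zero]
  exact mul_left_cancel₀ one_sub_ne_zero (by linear_combination fixed)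

end IsSelfSimilar

theorem ofReal_integral_le_lintegral {X : Type*} [MeasurableSpace X] {μ : Measure X} {f : X → ℝ}
    (hf : Integrable f μ) : ENNReal.ofReal (∫ x, f x ∂μ) ≤ ∫⁻ x, ENNReal.ofReal (f x) ∂μ := by
  have f_le : ∫ x, f x ∂μ ≤ ∫ x, max (f x) 0 ∂μ :=
    integral_mono hf hf.pos_part fun x ↦ le_max_left _ _
  have positive_part := ofReal_integral_eq_lintegral_ofReal hf.pos_part
    (ae_of_all _ fun x ↦ le_max_right (f x) 0)
  simpa only [ENNReal.ofReal_max, ENNReal.ofReal_zero, _root_.max_zero] using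
    (ENNReal.ofReal_le_ofReal f_le).trans_eq positive_part

namespace IsSelfSimilar

variable {ι E : Type*} [Fintype ι] [NormedAddCommGroup E] [InnerProductSpace ℝ E]
  [MeasurableSpace E] [BorelSpace E] {b : AffineBasis ι ℝ E} {ρ : ℝ} {w : ι → NNReal}
  {μ : Measure E} [IsProbabilityMeasure μ]

theorem integrable_interpolant (h : IsSelfSimilar (fun i ↦ AffineMap.homothety (b i) ρ) w μ)
    (hρ0 : 0 ≤ ρ) (hρ1 : ρ < 1) (m : ι → ℝ) (r : ℝ) :
    Integrable (fun x ↦ ∑ k, b.coord k x * m k - r ^ 2 * barycentricSpread b x) μ :=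
  (integrable_finsetSum _ fun k _ ↦ (h.integrable_coord hρ0 hρ1 k).mul_const _).sub
    ((h.integrable_barycentricSpread hρ0 hρ1).const_mul _)

theorem integral_interpolant (h : IsSelfSimilar (fun i ↦ AffineMap.homothety (b i) ρ) w μ)
    (hρ0 : 0 ≤ ρ) (hρ1 : ρ < 1) (m : ι → ℝ) (r : ℝ) :
    ∫ x, (∑ k, b.coord k x * m k - r ^ 2 * barycentricSpread b x) ∂μ =
      ∑ k, w k * m k - r ^ 2 * ∫ x, barycentricSpread b x ∂μ := by
  have integrable_coord := fun k ↦ (h.integrable_coord hρ0 hρ1 k).mul_const (m k)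
  rw [integral_sub (integrable_finsetSum _ fun k _ ↦ integrable_coord k)
    ((h.integrable_barycentricSpread hρ0 hρ1).const_mul _),
    integral_finsetSum _ fun k _ ↦ integrable_coord k, integral_const_mul]
  simp only [integral_mul_const, h.integral_coord hρ0 hρ1]

theorem ofReal_le_lintegral_iInf_cell
    (h : IsSelfSimilar (fun i ↦ AffineMap.homothety (b i) ρ) w μ) (hρ0 : 0 ≤ ρ) (hρ1 : ρ < 1)
    {α : Set E} {m : ι → ℝ} {r : ℝ} {u : E} (hm : ∀ a ∈ α, ∀ k, m k ≤ ‖r • b k + u - a‖ ^ 2) :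
    ENNReal.ofReal (∑ k, w k * m k - r ^ 2 * ∫ x, barycentricSpread b x ∂μ) ≤
      ∫⁻ x, ⨅ a ∈ α, ENNReal.ofReal (‖r • x + u - a‖ ^ 2) ∂μ := by
  rw [← h.integral_interpolant hρ0 hρ1]
  refine (ofReal_integral_le_lintegral (h.integrable_interpolant hρ0 hρ1 m r)).trans
    (lintegral_mono_ae ?_)
  filter_upwards [h.ae_coord_nonneg hρ0 hρ1] with x hx
  refine le_iInf₂ fun a ha ↦ ENNReal.ofReal_le_ofReal ?_
  have interpolant_le : ∑ k, b.coord k x * m k ≤ ∑ k, b.coord k x * ‖r • b k + u - a‖ ^ 2 :=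
    Finset.sum_le_sum fun k _ ↦ mul_le_mul_of_nonneg_left (hm a ha k) (hx k)
  linarith [sum_coord_mul_norm_smul_add_sub_sq b r u a x]

theorem integral_cell (h : IsSelfSimilar (fun i ↦ AffineMap.homothety (b i) ρ) w μ)
    (hρ0 : 0 ≤ ρ) (hρ1 : ρ < 1) (r : ℝ) (u a : E) : ∫ x, ‖r • x + u - a‖ ^ 2 ∂μ =
      ∑ k, w k * ‖r • b k + u - a‖ ^ 2 - r ^ 2 * ∫ x, barycentricSpread b x ∂μ := by
  simp only [← h.integral_interpolant hρ0 hρ1, sum_coord_mul_norm_smul_add_sub_sq,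
    add_sub_cancel_left]

theorem lintegral_cell (h : IsSelfSimilar (fun i ↦ AffineMap.homothety (b i) ρ) w μ)
    (hρ0 : 0 ≤ ρ) (hρ1 : ρ < 1) (r : ℝ) (u a : E) :
    ∫⁻ x, ENNReal.ofReal (‖r • x + u - a‖ ^ 2) ∂μ =
      ENNReal.ofReal (∫ x, ‖r • x + u - a‖ ^ 2 ∂μ) := by
  have integrable := h.integrable_interpolant hρ0 hρ1 (fun k ↦ ‖r • b k + u - a‖ ^ 2) r
  simp only [sum_coord_mul_norm_smul_add_sub_sq, add_sub_cancel_left] at integrable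
  exact (ofReal_integral_eq_lintegral_ofReal integrable (ae_of_all _ fun _ ↦ sq_nonneg _)).symm

end IsSelfSimilar

section QuantizationError

variable {ι κ : Type*} [Fintype ι] [Fintype κ] {b : AffineBasis ι ℝ E2} {ρ : ℝ} {w : ι → NNReal}
  {r : ℝ} {u : κ → E2} {v : κ → NNReal} {μ : Measure E2} {α : Set E2} {n : ℕ}

theorem err_empty [NeZero μ] : err μ ∅ = ⊤ := by
  simp [err, NeZero.ne]

theorem measurable_iInf_ofReal_norm_sub_sq (hα : α.Countable) :
    Measurable fun x ↦ ⨅ a ∈ α, ENNReal.ofReal (‖x - a‖ ^ 2) :=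
  .biInf α hα fun a _ ↦ by fun_prop

theorem isOptimal_and_quantErr_eq {c : ℝ≥0∞} (hα : α.Finite) (hn : α.ncard ≤ n)
    (hle : err μ α ≤ c) (hge : ∀ β : Set E2, β.Finite → β.ncard ≤ n → c ≤ err μ β) :
    IsOptimal μ n α ∧ quantErr μ n = c := by
  have quantErr_eq : quantErr μ n = c :=
    le_antisymm ((iInf₂_le α ⟨hα, hn⟩).trans hle) (le_iInf₂ fun β hβ ↦ hge β hβ.1 hβ.2)
  exact ⟨⟨hα, hn, (hle.antisymm (hge α hα hn)).trans quantErr_eq.symm⟩, quantErr_eq⟩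

variable [IsProbabilityMeasure μ]

theorem ofReal_le_err (h : IsSelfSimilar (fun i ↦ AffineMap.homothety (b i) ρ) w μ) (hρ0 : 0 ≤ ρ)
    (hρ1 : ρ < 1) (hcells : IsSelfSimilar (fun c x ↦ r • x + u c) v μ) (hα : α.Countable)
    {m : κ → ι → ℝ} (hm : ∀ a ∈ α, ∀ c k, m c k ≤ ‖r • b k + u c - a‖ ^ 2) :
    ENNReal.ofReal (∑ c, v c * ∑ k, w k * m c k - r ^ 2 * ∫ x, barycentricSpread b x ∂μ) ≤
      err μ α := by
  have sum_weights : ∑ c, (v c : ℝ) = 1 := by exact_mod_cast hcells.sum_weights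
  rw [err, hcells.lintegral_eq (measurable_iInf_ofReal_norm_sub_sq hα)]
  calc ENNReal.ofReal (∑ c, v c * ∑ k, w k * m c k - r ^ 2 * ∫ x, barycentricSpread b x ∂μ)
      = ENNReal.ofReal
          (∑ c, v c * (∑ k, w k * m c k - r ^ 2 * ∫ x, barycentricSpread b x ∂μ)) := by
        simp only [mul_sub, Finset.sum_sub_distrib, ← Finset.sum_mul, sum_weights, one_mul]
    _ ≤ ∑ c, ENNReal.ofReal
          (v c * (∑ k, w k * m c k - r ^ 2 * ∫ x, barycentricSpread b x ∂μ)) :=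
        Finset.le_sum_of_subadditive _ ENNReal.ofReal_zero.le (fun _ _ ↦ ENNReal.ofReal_add_le) _ _
    _ ≤ ∑ c, v c * ∫⁻ x, ⨅ a ∈ α, ENNReal.ofReal (‖r • x + u c - a‖ ^ 2) ∂μ := by
        gcongr with c
        rw [ENNReal.ofReal_mul (v c).coe_nonneg, ENNReal.ofReal_coe_nnreal]
        gcongr
        exact h.ofReal_le_lintegral_iInf_cell hρ0 hρ1 fun a ha ↦ hm a ha c

theorem err_le_ofReal (h : IsSelfSimilar (fun i ↦ AffineMap.homothety (b i) ρ) w μ) (hρ0 : 0 ≤ ρ)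
    (hρ1 : ρ < 1) (hcells : IsSelfSimilar (fun c x ↦ r • x + u c) v μ) (hα : α.Countable)
    {g : κ → E2} (hg : ∀ c, g c ∈ α) :
    err μ α ≤ ENNReal.ofReal (∑ c, v c * ∑ k, w k * ‖r • b k + u c - g c‖ ^ 2
      - r ^ 2 * ∫ x, barycentricSpread b x ∂μ) := by
  have sum_weights : ∑ c, (v c : ℝ) = 1 := by exact_mod_cast hcells.sum_weights
  rw [err, hcells.lintegral_eq (measurable_iInf_ofReal_norm_sub_sq hα)]
  calc ∑ c, v c * ∫⁻ x, ⨅ a ∈ α, ENNReal.ofReal (‖r • x + u c - a‖ ^ 2) ∂μ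
      ≤ ∑ c, v c * ∫⁻ x, ENNReal.ofReal (‖r • x + u c - g c‖ ^ 2) ∂μ := by
        gcongr with c
        exact iInf₂_le _ (hg c)
    _ = ∑ c, ENNReal.ofReal (v c * ∫ x, ‖r • x + u c - g c‖ ^ 2 ∂μ) := by
        simp only [h.lintegral_cell hρ0 hρ1, ENNReal.ofReal_mul (NNReal.coe_nonneg _),
          ENNReal.ofReal_coe_nnreal]
    _ = ENNReal.ofReal (∑ c, v c * ∫ x, ‖r • x + u c - g c‖ ^ 2 ∂μ) :=
        (ENNReal.ofReal_sum_of_nonneg fun c _ ↦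
          mul_nonneg (v c).coe_nonneg (integral_nonneg fun _ ↦ sq_nonneg _)).symm
    _ = _ := by
        simp only [h.integral_cell hρ0 hρ1, mul_sub, Finset.sum_sub_distrib, ← Finset.sum_mul,
          sum_weights, one_mul]

theorem IsDualCertificate.le_err
    (h : IsSelfSimilar (fun i ↦ AffineMap.homothety (b i) ρ)
      (fun _ ↦ (Fintype.card ι : NNReal)⁻¹) μ)
    (hρ0 : 0 ≤ ρ) (hρ1 : ρ < 1)
    (hcells : IsSelfSimilar (fun c x ↦ r • x + u c) (fun _ ↦ (Fintype.card κ : NNReal)⁻¹) μ)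
    {y : κ × ι → ℝ} {Λ : ℝ} (cert : IsDualCertificate (fun p : κ × ι ↦ r • b p.2 + u p.1) y Λ)
    (hα : α.Finite) (hn : α.ncard ≤ n) :
    ENNReal.ofReal ((∑ p, y p - n * Λ) / Fintype.card (κ × ι)
      - r ^ 2 * ∫ x, barycentricSpread b x ∂μ) ≤ err μ α := by
  rcases α.eq_empty_or_nonempty with rfl | hne
  · exact (err_empty (μ := μ)).symm ▸ le_top
  choose nearest nearest_mem nearest_le using fun p : κ × ι ↦
    Set.exists_min_image α (fun a ↦ ‖r • b p.2 + u p.1 - a‖ ^ 2) hα hne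
  refine le_trans (ENNReal.ofReal_le_ofReal ?_) (ofReal_le_err h hρ0 hρ1 hcells hα.countable
    (m := fun c k ↦ ‖r • b k + u c - nearest (c, k)‖ ^ 2) fun a ha c k ↦ nearest_le (c, k) a ha)
  have duality := cert.sum_sub_mul_le_sum hα hn fun p ↦ ⟨nearest p, nearest_mem p, le_rfl⟩
  rw [Fintype.sum_prod_type (f := fun p ↦ ‖r • b p.2 + u p.1 - nearest p‖ ^ 2)] at duality
  simp only [← Finset.mul_sum, Fintype.card_prod]
  push_cast
  rw [← mul_assoc, ← mul_inv, inv_mul_eq_div]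
  gcongr

end QuantizationError

section Lattice

variable {ι κ F : Type*} [Fintype ι] [Fintype κ] [NormedAddCommGroup F] [InnerProductSpace ℝ F]

/-- The squared distance in `ℤ ^ ι`, in which the distances between points with rational barycentric
coordinates with respect to a regular simplex can be computed. -/
def latticeSqDist (m n : ι → ℤ) : ℤ :=
  ∑ l, (m l - n l) ^ 2

theorem norm_sum_div_smul_sub_sq {v : ι → F} (hv : Pairwise fun i j ↦ ‖v i - v j‖ = 1) (N : ℝ)
    {m n : ι → ℤ} (hmn : ∑ l, m l = ∑ l, n l) :
    ‖∑ l, (m l / N) • v l - ∑ l, (n l / N) • v l‖ ^ 2 = latticeSqDist m n / (2 * N ^ 2) := by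
  have sum_eq_zero : ∑ l, ((m l - n l : ℝ) / N) = 0 := by
    rw [← Finset.sum_div, Finset.sum_sub_distrib]
    exact_mod_cast by simp [hmn]
  simp only [← Finset.sum_sub_distrib, ← sub_smul, ← sub_div,
    norm_sum_smul_sq_of_pairwise_norm_sub_eq_one hv sum_eq_zero, latticeSqDist, div_pow,
    ← Finset.sum_div]
  push_cast
  rw [div_div, mul_comm]

theorem isDualCertificate_of_lattice {v : ι → F} (hv : Pairwise fun i j ↦ ‖v i - v j‖ = 1) {N : ℝ}
    (hN : 0 < N) {n : κ → ι → ℤ} (hn : ∀ p q, ∑ l, n p l = ∑ l, n q l) {y : κ → ℤ} {Λ : ℤ}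
    (hΛ : 0 ≤ Λ)
    (h : ∀ s : Finset κ,
      (s : Set κ).Pairwise (fun p q ↦ latticeSqDist (n p) (n q) < y p + y q) →
        s.card * (∑ p ∈ s, y p - Λ) ≤ ∑ p ∈ s, ∑ q ∈ s, latticeSqDist (n p) (n q)) :
    IsDualCertificate (fun p ↦ ∑ l, (n p l / N) • v l) (fun p ↦ y p / (4 * N ^ 2))
      (Λ / (4 * N ^ 2)) := by
  refine .of_forall_cluster (by positivity) fun s hs ↦ ?_
  simp only [norm_sum_div_smul_sub_sq hv N (hn _ _)] at hs ⊢
  have close : (s : Set κ).Pairwise fun p q ↦ latticeSqDist (n p) (n q) < y p + y q := by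
    refine hs.imp fun p q hpq ↦ ?_
    field_simp at hpq
    exact_mod_cast (by linarith : (latticeSqDist (n p) (n q) : ℝ) < y p + y q)
  have cluster : (s.card : ℝ) * (∑ p ∈ s, (y p : ℝ) - Λ) ≤
      ∑ p ∈ s, ∑ q ∈ s, (latticeSqDist (n p) (n q) : ℝ) := by
    exact_mod_cast h s close
  simp only [← Finset.sum_div]
  field_simp
  linarith

end Lattice

section CellVertices

/-- Three times the barycentric coordinates of the vertex `p.2` of the first level cell `p.1` of a
triangle. -/
def cellVertex (p : Fin 3 × Fin 3) : Fin 3 → ℤ :=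
  Pi.single p.1 2 + Pi.single p.2 1

/-- Nine times the barycentric coordinates of the vertex `p.2` of the second level cell `p.1`. -/
def subcellVertex (p : (Fin 3 × Fin 3) × Fin 3) : Fin 3 → ℤ :=
  Pi.single p.1.1 6 + cellVertex (p.1.2, p.2)

/-- The dual variables of the cell vertices: corners of the triangle pay twice as much as the
other vertices. -/
def price (p : Fin 3 × Fin 3) : ℤ :=
  if p.1 = p.2 then 14 else 7

theorem card_mul_sum_price_sub_le (s : Finset (Fin 3 × Fin 3)) :
    s.card * (∑ p ∈ s, price p - 24) ≤
      ∑ p ∈ s, ∑ q ∈ s, latticeSqDist (cellVertex p) (cellVertex q) := by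
  revert s
  decide +kernel

theorem facing_corners_of_close : ∀ p q : (Fin 3 × Fin 3) × Fin 3, p.1.1 ≠ q.1.1 →
    latticeSqDist (subcellVertex p) (subcellVertex q) < price (p.1.2, p.2) + price (q.1.2, q.2) →
      p = ((p.1.1, q.1.1), q.1.1) ∧ latticeSqDist (subcellVertex p) (subcellVertex q) = 18 := by
  decide +kernel

theorem card_mul_sum_price_sub_le_of_same_triangle {s : Finset ((Fin 3 × Fin 3) × Fin 3)}
    (hs : ∀ p ∈ s, ∀ q ∈ s, p.1.1 = q.1.1) :
    s.card * (∑ p ∈ s, price (p.1.2, p.2) - 24) ≤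
      ∑ p ∈ s, ∑ q ∈ s, latticeSqDist (subcellVertex p) (subcellVertex q) := by
  have sqDist_eq : ∀ p ∈ s, ∀ q ∈ s, latticeSqDist (subcellVertex p) (subcellVertex q) =
      latticeSqDist (cellVertex (p.1.2, p.2)) (cellVertex (q.1.2, q.2)) := fun p hp q hq ↦ by
    simp only [latticeSqDist, subcellVertex, Pi.add_apply, hs p hp q hq, add_sub_add_left_eq_sub]
  have injOn : Set.InjOn (fun p : (Fin 3 × Fin 3) × Fin 3 ↦ (p.1.2, p.2)) s := fun p hp q hq h ↦
    Prod.ext (Prod.ext (hs p hp q hq) (congrArg Prod.fst h)) (congrArg (·.2) h)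
  have single := card_mul_sum_price_sub_le (s.image fun p ↦ (p.1.2, p.2))
  simp only [Finset.card_image_of_injOn injOn, Finset.sum_image injOn] at single
  rwa [Finset.sum_congr rfl fun p hp ↦ Finset.sum_congr rfl (sqDist_eq p hp)]

-- A cluster meeting two of the three triangles consists of two corners facing each other, whose
-- joint saving is `14 + 14 - 18 < 24`.
theorem card_mul_sum_price_sub_le_of_close {s : Finset ((Fin 3 × Fin 3) × Fin 3)}
    (hs : (s : Set ((Fin 3 × Fin 3) × Fin 3)).Pairwise fun p q ↦
      latticeSqDist (subcellVertex p) (subcellVertex q) <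
        price (p.1.2, p.2) + price (q.1.2, q.2)) :
    s.card * (∑ p ∈ s, price (p.1.2, p.2) - 24) ≤
      ∑ p ∈ s, ∑ q ∈ s, latticeSqDist (subcellVertex p) (subcellVertex q) := by
  by_cases same_triangle : ∀ p ∈ s, ∀ q ∈ s, p.1.1 = q.1.1
  · exact card_mul_sum_price_sub_le_of_same_triangle same_triangle
  push Not at same_triangle
  obtain ⟨p, hp, q, hq, hpq⟩ := same_triangle
  have facing : ∀ p ∈ s, ∀ q ∈ s, p.1.1 ≠ q.1.1 → p = ((p.1.1, q.1.1), q.1.1) ∧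
      latticeSqDist (subcellVertex p) (subcellVertex q) = 18 := fun p hp q hq hpq ↦
    facing_corners_of_close p q hpq (hs hp hq fun h ↦ hpq (congrArg (·.1.1) h))
  have s_eq : s = {p, q} := by
    refine Finset.Subset.antisymm (fun r hr ↦ ?_) (by simp [Finset.insert_subset_iff, hp, hq])
    rw [Finset.mem_insert, Finset.mem_singleton]
    by_cases hrp : r.1.1 = p.1.1
    · left
      rw [(facing r hr q hq (hrp ▸ hpq)).1, (facing p hp q hq hpq).1, hrp]
    · right
      have hrq : r.1.1 = q.1.1 := congrArg (·.2)
        ((facing p hp r hr (Ne.symm hrp)).1.symm.trans (facing p hp q hq hpq).1)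
      rw [(facing r hr p hp hrp).1, (facing q hq p hp hpq.symm).1, hrq]
  have p_ne_q : p ≠ q := fun h ↦ hpq (congrArg (·.1.1) h)
  have price_corner : ∀ p ∈ s, ∀ q ∈ s, p.1.1 ≠ q.1.1 → price (p.1.2, p.2) = 14 := by
    intro p hp q hq hpq
    rw [(facing p hp q hq hpq).1]
    simp [price]
  rw [s_eq, Finset.card_pair p_ne_q]
  simp only [Finset.sum_pair p_ne_q, price_corner p hp q hq hpq,
    price_corner q hq p hp hpq.symm, (facing p hp q hq hpq).2, (facing q hq p hp hpq.symm).2]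
  simp [latticeSqDist]

end CellVertices

section Triangle

/-- The vertices of the triangle carrying the R-measure. -/
def vertex : Fin 3 → E2 :=
  ![pt 0 0, pt 1 0, pt (1 / 2) (√3 / 2)]

@[simp] theorem pt_apply_zero (x y : ℝ) : pt x y 0 = x := rfl

@[simp] theorem pt_apply_one (x y : ℝ) : pt x y 1 = y := rfl

theorem norm_sub_sq_eq_add (x y : E2) : ‖x - y‖ ^ 2 = (x 0 - y 0) ^ 2 + (x 1 - y 1) ^ 2 := by
  simp [EuclideanSpace.norm_sq_eq]

theorem pairwise_norm_vertex_sub_eq_one : Pairwise fun i j ↦ ‖vertex i - vertex j‖ = 1 := by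
  have key : ∀ i j, i ≠ j → ‖vertex i - vertex j‖ ^ 2 = 1 := by
    intro i j hij
    fin_cases i <;> fin_cases j <;>
      first
      | exact absurd rfl hij
      | norm_num [vertex, norm_sub_sq_eq_add, div_pow]
  intro i j hij
  nlinarith [key i j hij, norm_nonneg (vertex i - vertex j)]

/-- The triangle carrying the R-measure, as an affine frame of the plane. -/
def triangle : AffineBasis (Fin 3) ℝ E2 where
  toFun := vertex
  ind' := affineIndependent_of_pairwise_norm_sub_eq_one pairwise_norm_vertex_sub_eq_one
  tot' := by
    rw [(affineIndependent_of_pairwise_norm_sub_eq_one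
      pairwise_norm_vertex_sub_eq_one).affineSpan_eq_top_iff_card_eq_finrank_add_one]
    simp

@[simp] theorem coe_triangle : ⇑triangle = vertex := rfl

theorem Smap_eq_homothety (i : Fin 3) :
    Smap i = AffineMap.homothety (triangle i) (3⁻¹ : ℝ) := by
  ext x l
  fin_cases i <;> fin_cases l <;>
    simp [Smap, S1, S2, S3, vertex, AffineMap.homothety_apply] <;> ring

theorem Smap_apply (i : Fin 3) (x : E2) :
    Smap i x = (3⁻¹ : ℝ) • x + (2 / 3 : ℝ) • triangle i := by
  rw [Smap_eq_homothety, AffineMap.homothety_apply, vsub_eq_sub, vadd_eq_add]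
  module

theorem isDualCertificate_cells : IsDualCertificate
    (fun p : Fin 3 × Fin 3 ↦ (3⁻¹ : ℝ) • triangle p.2 + (2 / 3 : ℝ) • triangle p.1)
    (fun p ↦ price p / (4 * 3 ^ 2)) ((24 : ℤ) / (4 * 3 ^ 2)) := by
  have vertex_eq : ∀ p : Fin 3 × Fin 3,
      (3⁻¹ : ℝ) • triangle p.2 + (2 / 3 : ℝ) • triangle p.1 =
        ∑ l, (cellVertex p l / 3 : ℝ) • triangle l := by
    simp [cellVertex, Pi.single_apply, add_div, add_smul, Finset.sum_add_distrib, ite_div,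
      add_comm]
  simp only [vertex_eq]
  exact isDualCertificate_of_lattice pairwise_norm_vertex_sub_eq_one (by norm_num) (by decide)
    (by norm_num) fun s _ ↦ card_mul_sum_price_sub_le s

theorem isDualCertificate_subcells : IsDualCertificate
    (fun p : (Fin 3 × Fin 3) × Fin 3 ↦ (9⁻¹ : ℝ) • triangle p.2 +
      ((2 / 9 : ℝ) • triangle p.1.2 + (2 / 3 : ℝ) • triangle p.1.1))
    (fun p ↦ price (p.1.2, p.2) / (4 * 9 ^ 2)) ((24 : ℤ) / (4 * 9 ^ 2)) := by
  have vertex_eq : ∀ p : (Fin 3 × Fin 3) × Fin 3, (9⁻¹ : ℝ) • triangle p.2 +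
      ((2 / 9 : ℝ) • triangle p.1.2 + (2 / 3 : ℝ) • triangle p.1.1) =
        ∑ l, (subcellVertex p l / 9 : ℝ) • triangle l := by
    intro p
    simp only [subcellVertex, cellVertex, Pi.add_apply, Pi.single_apply, Int.cast_add, Int.cast_ite,
      Int.cast_ofNat, Int.cast_zero, Int.cast_one, add_div, ite_div, zero_div, add_smul, ite_smul,
      zero_smul, Finset.sum_add_distrib, Finset.sum_ite_eq', Finset.mem_univ, if_true]
    module
  simp only [vertex_eq]
  exact isDualCertificate_of_lattice pairwise_norm_vertex_sub_eq_one (by norm_num)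
    (by decide +kernel) (by norm_num) fun s hs ↦ card_mul_sum_price_sub_le_of_close hs

end Triangle

/-- The R-measure: the self-similar measure of `Smap` with equal weights. -/
def IsRMeasure (P : Measure E2) : Prop :=
  IsSelfSimilar Smap (fun _ ↦ (Fintype.card (Fin 3) : NNReal)⁻¹) P

namespace IsRMeasure

variable {P : Measure E2}

theorem of_eq (hP : P = (3 : ℝ≥0∞)⁻¹ • (P.map S1 + P.map S2 + P.map S3)) : IsRMeasure P where
  measurable i := by
    rw [Smap_eq_homothety]
    exact (AffineMap.continuous_of_finiteDimensional _).measurable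
  eq_sum := by
    conv_lhs => rw [hP]
    simp [Fin.sum_univ_three, Smap, ← smul_add, ENNReal.smul_def]

theorem homothety (h : IsRMeasure P) :
    IsSelfSimilar (fun i ↦ AffineMap.homothety (triangle i) (3⁻¹ : ℝ))
      (fun _ ↦ (Fintype.card (Fin 3) : NNReal)⁻¹) P := by
  simpa only [IsRMeasure, ← Smap_eq_homothety] using h

theorem cells (h : IsRMeasure P) :
    IsSelfSimilar (fun c x ↦ (3⁻¹ : ℝ) • x + (2 / 3 : ℝ) • triangle c)
      (fun _ ↦ (Fintype.card (Fin 3) : NNReal)⁻¹) P := by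
  simpa only [IsRMeasure, ← Smap_apply] using h

theorem subcells (h : IsRMeasure P) :
    IsSelfSimilar
      (fun (c : Fin 3 × Fin 3) x ↦
        (9⁻¹ : ℝ) • x + ((2 / 9 : ℝ) • triangle c.2 + (2 / 3 : ℝ) • triangle c.1))
      (fun _ ↦ (Fintype.card (Fin 3 × Fin 3) : NNReal)⁻¹) P := by
  convert IsSelfSimilar.comp h h using 3 with c x
  · simp only [Function.comp_apply, Smap_apply]
    module
  · norm_num

variable [IsProbabilityMeasure P]

theorem integral_barycentricSpread (h : IsRMeasure P) :
    ∫ x, barycentricSpread triangle x ∂P = 1 / 6 := by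
  have sq_dist : ∀ i k, ‖triangle k - triangle i‖ ^ 2 = 1 - if k = i then 1 else 0 := fun i k ↦ by
    split_ifs with hki
    · simp [hki]
    · simp [pairwise_norm_vertex_sub_eq_one hki]
  rw [h.homothety.integral_barycentricSpread (by norm_num) (by norm_num)]
  simp only [sq_dist]
  norm_num [← Finset.mul_sum]

theorem le_err_of_cells (h : IsRMeasure P) {α : Set E2} {n : ℕ} (hα : α.Finite)
    (hn : α.ncard ≤ n) : ENNReal.ofReal ((13 - 4 * n) / 54) ≤ err P α := by
  have bound := isDualCertificate_cells.le_err h.homothety (by norm_num) (by norm_num) h.cells hα hn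
  have sum_price : ∑ p, (price p : ℝ) = 84 := by exact_mod_cast (by decide : ∑ p, price p = 84)
  rw [h.integral_barycentricSpread, ← Finset.sum_div, sum_price] at bound
  convert bound using 2
  norm_num
  ring

theorem le_err_of_subcells (h : IsRMeasure P) {α : Set E2} {n : ℕ} (hα : α.Finite)
    (hn : α.ncard ≤ n) : ENNReal.ofReal ((39 - 4 * n) / 1458) ≤ err P α := by
  have bound := isDualCertificate_subcells.le_err h.homothety (by norm_num) (by norm_num)
    h.subcells hα hn
  have sum_price : ∑ p : (Fin 3 × Fin 3) × Fin 3, (price (p.1.2, p.2) : ℝ) = 252 := by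
    exact_mod_cast (by decide : ∑ p : (Fin 3 × Fin 3) × Fin 3, price (p.1.2, p.2) = 252)
  rw [h.integral_barycentricSpread, ← Finset.sum_div, sum_price] at bound
  convert bound using 2
  norm_num
  ring

theorem err_one_le (h : IsRMeasure P) :
    err P {pt (1 / 2) (√3 / 6)} ≤ ENNReal.ofReal (1 / 6) := by
  refine (err_le_ofReal h.homothety (by norm_num) (by norm_num) h.cells (Set.countable_singleton _)
    (g := fun _ ↦ pt (1 / 2) (√3 / 6)) fun _ ↦ rfl).trans_eq ?_
  rw [h.integral_barycentricSpread]
  congr 1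
  simp only [Fin.sum_univ_three, Fintype.card_fin, Nat.cast_ofNat, NNReal.coe_inv, NNReal.coe_ofNat,
    coe_triangle, vertex, Matrix.cons_val, norm_sub_sq_eq_add, PiLp.add_apply, PiLp.smul_apply,
    smul_eq_mul, pt_apply_zero, pt_apply_one]
  ring_nf
  norm_num

theorem err_two_le (h : IsRMeasure P) :
    err P {pt (1 / 2) (√3 / 18), pt (1 / 2) (7 * √3 / 18)} ≤ ENNReal.ofReal (5 / 54) := by
  refine (err_le_ofReal h.homothety (by norm_num) (by norm_num) h.cells (Set.to_countable _)
    (g := ![pt (1 / 2) (√3 / 18), pt (1 / 2) (√3 / 18), pt (1 / 2) (7 * √3 / 18)])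
    fun c ↦ by fin_cases c <;> simp).trans_eq ?_
  rw [h.integral_barycentricSpread]
  congr 1
  simp only [Fin.sum_univ_three, Fintype.card_fin, Nat.cast_ofNat, NNReal.coe_inv, NNReal.coe_ofNat,
    coe_triangle, vertex, Matrix.cons_val, norm_sub_sq_eq_add, PiLp.add_apply, PiLp.smul_apply,
    smul_eq_mul, pt_apply_zero, pt_apply_one]
  ring_nf
  norm_num

theorem err_four_le (h : IsRMeasure P) :
    err P {pt (1 / 6) (√3 / 18), pt (5 / 6) (√3 / 18), pt (1 / 2) (25 * √3 / 54),
      pt (1 / 2) (19 * √3 / 54)} ≤ ENNReal.ofReal (23 / 1458) := by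
  refine (err_le_ofReal h.homothety (by norm_num) (by norm_num) h.subcells (Set.to_countable _)
    (g := fun c ↦ ![![pt (1 / 6) (√3 / 18), pt (1 / 6) (√3 / 18), pt (1 / 6) (√3 / 18)],
      ![pt (5 / 6) (√3 / 18), pt (5 / 6) (√3 / 18), pt (5 / 6) (√3 / 18)],
      ![pt (1 / 2) (19 * √3 / 54), pt (1 / 2) (19 * √3 / 54), pt (1 / 2) (25 * √3 / 54)]] c.1 c.2)
    ?_).trans_eq ?_
  · rintro ⟨i, j⟩
    fin_cases i <;> fin_cases j <;> simp
  rw [h.integral_barycentricSpread]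
  congr 1
  simp only [Fintype.sum_prod_type, Fin.sum_univ_three, Fintype.card_prod, Fintype.card_fin,
    Nat.cast_ofNat, NNReal.coe_inv, NNReal.coe_ofNat, Nat.cast_mul, NNReal.coe_mul,
    coe_triangle, vertex, Matrix.cons_val, norm_sub_sq_eq_add, PiLp.add_apply, PiLp.smul_apply,
    smul_eq_mul, pt_apply_zero, pt_apply_one]
  ring_nf
  norm_num

theorem quantErr_one (h : IsRMeasure P) : quantErr P 1 = ENNReal.ofReal (1 / 6) :=
  (isOptimal_and_quantErr_eq (Set.finite_singleton _) (Set.ncard_singleton _).le h.err_one_le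
    fun β hβ hn ↦ by convert h.le_err_of_cells hβ hn using 2; norm_num).2

theorem quantErr_two (h : IsRMeasure P) : quantErr P 2 = ENNReal.ofReal (5 / 54) :=
  (isOptimal_and_quantErr_eq (Set.toFinite _)
    (by grw [Set.ncard_insert_le, Set.ncard_singleton]) h.err_two_le
    fun β hβ hn ↦ by convert h.le_err_of_cells hβ hn using 2; norm_num).2

theorem isOptimal_four_and_quantErr_four (h : IsRMeasure P) :
    IsOptimal P 4 {pt (1 / 6) (√3 / 18), pt (5 / 6) (√3 / 18), pt (1 / 2) (25 * √3 / 54),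
      pt (1 / 2) (19 * √3 / 54)} ∧ quantErr P 4 = ENNReal.ofReal (23 / 1458) :=
  isOptimal_and_quantErr_eq (Set.toFinite _)
    (by grw [Set.ncard_insert_le, Set.ncard_insert_le, Set.ncard_insert_le, Set.ncard_singleton])
    h.err_four_le
    fun β hβ hn ↦ by convert h.le_err_of_subcells hβ hn using 2; norm_num

end IsRMeasure

theorem centres_eq :
    ({S1 (pt (1 / 2) (√3 / 6)), S2 (pt (1 / 2) (√3 / 6)), S3 (S3 (pt (1 / 2) (√3 / 6))),
        (2 : ℝ)⁻¹ • (S3 (S1 (pt (1 / 2) (√3 / 6))) + S3 (S2 (pt (1 / 2) (√3 / 6))))} : Set E2) =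
      {pt (1 / 6) (√3 / 18), pt (5 / 6) (√3 / 18), pt (1 / 2) (25 * √3 / 54),
        pt (1 / 2) (19 * √3 / 54)} := by
  refine congrArg₂ insert ?_ (congrArg₂ insert ?_ (congrArg₂ insert ?_ (congrArg singleton ?_))) <;>
    ext l <;> fin_cases l <;> simp [S1, S2, S3] <;> ring

/-- The set {S₁(c), S₂(c), S₃(S₃(c)), (S₃(S₁(c))+S₃(S₂(c)))/2}
= {(1/6, √3/18), (5/6, √3/18), (1/2, 25√3/54), (1/2, 19√3/54)}, where c = (1/2, √3/6),
is an optimal set of four-means for the R-measure P, with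
V₄(P) = (1/27)(2V₁(P) + V₂(P)) = 23/1458. -/
theorem stmt_11 (P : Measure E2) [IsProbabilityMeasure P]
    (hP : P = (3 : ℝ≥0∞)⁻¹ • (P.map S1 + P.map S2 + P.map S3)) :
    ({S1 (pt (1/2) (Real.sqrt 3 / 6)), S2 (pt (1/2) (Real.sqrt 3 / 6)),
        S3 (S3 (pt (1/2) (Real.sqrt 3 / 6))),
        (2 : ℝ)⁻¹ • (S3 (S1 (pt (1/2) (Real.sqrt 3 / 6)))
          + S3 (S2 (pt (1/2) (Real.sqrt 3 / 6))))} : Set E2)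
        = {pt (1/6) (Real.sqrt 3 / 18), pt (5/6) (Real.sqrt 3 / 18),
            pt (1/2) (25 * Real.sqrt 3 / 54), pt (1/2) (19 * Real.sqrt 3 / 54)}
      ∧ IsOptimal P 4 {pt (1/6) (Real.sqrt 3 / 18), pt (5/6) (Real.sqrt 3 / 18),
          pt (1/2) (25 * Real.sqrt 3 / 54), pt (1/2) (19 * Real.sqrt 3 / 54)}
      ∧ quantErr P 4 = (27 : ℝ≥0∞)⁻¹ * (2 * quantErr P 1 + quantErr P 2)
      ∧ quantErr P 4 = 23 / 1458 := by
  have h : IsRMeasure P := .of_eq hP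
  obtain ⟨optimal, quantErr_four⟩ := h.isOptimal_four_and_quantErr_four
  refine ⟨centres_eq, optimal, ?_, ?_⟩
  · rw [quantErr_four, h.quantErr_one, h.quantErr_two,
      ← ENNReal.toReal_eq_toReal_iff' (by finiteness) (by finiteness)]
    norm_num [ENNReal.toReal_add ENNReal.ofReal_ne_top ENNReal.ofReal_ne_top,
      ENNReal.toReal_add (ENNReal.mul_ne_top ENNReal.ofNat_ne_top ENNReal.ofReal_ne_top)]
  · rw [quantErr_four, ENNReal.ofReal_div_of_pos (by norm_num)]
    simp

end
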